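/- arXiv:2401.17516 — 2 statements merged into one kernel-verified Lean document; each statement's English description precedes it below -/
import Mathlib

section
/- Let C be an abelian category with enough projectives and injectives and X ⊆ C an (n+2)-rigid functorially finite subcategory with X^{⊥_{≤ n+1}} = ^{⊥_{≤ n+1}}X. If 2 ≤ m ≤ n+1, 2m − n ≥ 1, and X^{⊥_{≤ m}} = ^{⊥_{≤ m}}X, then X^{⊥_{≤ m}} = X^{⊥_{≤ n+1}}. -/
open CategoryTheory CategoryTheory.Limits CategoryTheory.Abelian

universe w v u

variable {C : Type u} [Category.{v} C] [Abelian C] [HasExt.{w} C]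

/-- The right orthogonal `X^{⊥_{≤ m}}`: objects `N` with `Ext^i(A, N) = 0` for all
`A ∈ X` and `1 ≤ i ≤ m`. -/
def rightPerpLE (X : Set C) (m : ℕ) : Set C :=
  {N | ∀ A ∈ X, ∀ i : ℕ, 1 ≤ i → i ≤ m → Subsingleton (Abelian.Ext A N i)}

/-- The left orthogonal `^{⊥_{≤ m}}X`. -/
def leftPerpLE (X : Set C) (m : ℕ) : Set C :=
  {M | ∀ A ∈ X, ∀ i : ℕ, 1 ≤ i → i ≤ m → Subsingleton (Abelian.Ext M A i)}

/-- `X` is `m+1`-rigid: `Ext^i(X, X') = 0` for all `X, X' ∈ X`, `1 ≤ i ≤ m`. -/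
def IsRigidLE (X : Set C) (m : ℕ) : Prop :=
  ∀ A ∈ X, ∀ B ∈ X, ∀ i : ℕ, 1 ≤ i → i ≤ m → Subsingleton (Abelian.Ext A B i)

/-- `g : A ⟶ M` is a right `X`-approximation (an `X`-precover) of `M`. -/
def IsPrecover (X : Set C) {A M : C} (g : A ⟶ M) : Prop :=
  A ∈ X ∧ ∀ A' ∈ X, ∀ h : A' ⟶ M, ∃ t : A' ⟶ A, t ≫ g = h

/-- `f : M ⟶ A` is a left `X`-approximation (an `X`-preenvelope) of `M`. -/
def IsPreenvelope (X : Set C) {A M : C} (f : M ⟶ A) : Prop :=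
  A ∈ X ∧ ∀ A' ∈ X, ∀ h : M ⟶ A', ∃ t : A ⟶ A', f ≫ t = h

/-- `X` is precovering in the full subcategory `D`. -/
def IsPrecoveringIn (D X : Set C) : Prop :=
  ∀ M ∈ D, ∃ (A : C) (g : A ⟶ M), IsPrecover X g

/-- `X` is preenveloping in the full subcategory `D`. -/
def IsPreenvelopingIn (D X : Set C) : Prop :=
  ∀ M ∈ D, ∃ (A : C) (f : M ⟶ A), IsPreenvelope X f

/-- `addClosure S` is the closure of `S` under finite direct sums and direct summands. -/
inductive addClosure (S : Set C) : C → Prop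
  | of {A : C} (h : A ∈ S) : addClosure S A
  | zero (O : C) (h : IsZero O) : addClosure S O
  | biprod {A B : C} : addClosure S A → addClosure S B → addClosure S (A ⊞ B)
  | retract {A B : C} (i : A ⟶ B) (r : B ⟶ A) (hir : i ≫ r = 𝟙 A) :
      addClosure S B → addClosure S A

/-- The class of projective objects of `C`, as a set. -/
def projSet : Set C := {P | Projective P}

/-- The class of injective objects of `C`, as a set. -/
def injSet : Set C := {I | Injective I}

/-- The projective objects of an extension-closed subcategory `R` (with the exact structure
inherited from `C`): objects `P ∈ R` with `Ext^1(P, N) = 0` (computed in `C`) for all `N ∈ R`. -/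
def projIn (R : Set C) : Set C :=
  {P | P ∈ R ∧ ∀ N ∈ R, Subsingleton (Abelian.Ext P N 1)}

/-- The injective objects of an extension-closed subcategory `R`. -/
def injIn (R : Set C) : Set C :=
  {I | I ∈ R ∧ ∀ N ∈ R, Subsingleton (Abelian.Ext N I 1)}

/-!
Let `K ⟶ B ⟶ N` be a short exact sequence in which `B` is the sum of an `X`-precover of `N` and a
projective object mapping onto `N`. Then `B ∈ ^{⊥_{≤ n}}X ⊆ X^{⊥_{≤ n}}`, and since every map from
`X` to `N` lifts to `B`, the object `K` stays in `X^{⊥_{≤ m}}` when `N` lies there. Iterating gives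
syzygies `N₁, N₂, …` in `X^{⊥_{≤ m}} ⊆ ^{⊥_{≤ 1}}X`, and dimension shifting makes
`Ext^(i+1)(N, A)` a quotient of `Ext^1(Nᵢ, A) = 0` for `A ∈ X` and `i < n`.
Hence `X^{⊥_{≤ m}} ⊆ ^{⊥_{≤ n}}X ⊆ X^{⊥_{≤ n}}`.
-/

section Orthogonals

variable {X : Set C}

theorem rightPerpLE_antitone : Antitone (rightPerpLE X) :=
  fun _ _ hij _ hN A hA k hk hki => hN A hA k hk (hki.trans hij)

theorem leftPerpLE_antitone : Antitone (leftPerpLE X) :=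
  fun _ _ hij _ hM A hA k hk hki => hM A hA k hk (hki.trans hij)

theorem projective_mem_leftPerpLE (P : C) [Projective P] (n : ℕ) : P ∈ leftPerpLE X n := by
  intro A _ i hi _
  obtain ⟨k, rfl⟩ := Nat.exists_eq_add_of_le' hi
  exact Ext.subsingleton_of_projective P A k

theorem biprod_mem_leftPerpLE {n : ℕ} {M N : C} (hM : M ∈ leftPerpLE X n)
    (hN : N ∈ leftPerpLE X n) : (M ⊞ N) ∈ leftPerpLE X n := by
  intro A hA i hi hin
  have := hM A hA i hi hin
  have := hN A hA i hi hin
  exact Ext.biprodAddEquiv.subsingleton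

end Orthogonals

section DimensionShifting

variable {S : ShortComplex C} (hS : S.ShortExact) {A : C}

include hS

theorem subsingleton_ext_left_of_shortExact {k : ℕ} [Subsingleton (Ext.{w} A S.X₃ k)]
    [Subsingleton (Ext.{w} A S.X₂ (k + 1))] : Subsingleton (Ext.{w} A S.X₁ (k + 1)) := by
  refine subsingleton_of_forall_eq 0 fun x => ?_
  obtain ⟨y, rfl⟩ := Ext.covariant_sequence_exact₁ A hS x (Subsingleton.elim _ _) rfl
  rw [Subsingleton.elim y 0, Ext.zero_comp]

theorem subsingleton_ext_right_of_shortExact {k : ℕ} [Subsingleton (Ext.{w} S.X₁ A k)]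
    [Subsingleton (Ext.{w} S.X₂ A (k + 1))] : Subsingleton (Ext.{w} S.X₃ A (k + 1)) := by
  refine subsingleton_of_forall_eq 0 fun x => ?_
  obtain ⟨y, rfl⟩ :=
    Ext.contravariant_sequence_exact₃ hS A x (Subsingleton.elim _ _) (add_comm 1 k)
  rw [Subsingleton.elim y 0, Ext.comp_zero]

theorem subsingleton_ext_one_left_of_surjective
    (hlift : Function.Surjective fun t : A ⟶ S.X₂ => t ≫ S.g)
    [Subsingleton (Ext.{w} A S.X₂ 1)] : Subsingleton (Ext.{w} A S.X₁ 1) := by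
  refine subsingleton_of_forall_eq 0 fun x => ?_
  obtain ⟨y, rfl⟩ := Ext.covariant_sequence_exact₁ A hS x (Subsingleton.elim _ _) (zero_add 1)
  obtain ⟨h, rfl⟩ := (Ext.mk₀_bijective A S.X₃).surjective y
  obtain ⟨t, rfl⟩ := hlift h
  rw [← Ext.mk₀_comp_mk₀, Ext.comp_assoc_of_second_deg_zero, hS.comp_extClass, Ext.comp_zero]

variable {X : Set C}

theorem left_mem_rightPerpLE_of_shortExact {m l : ℕ} (hlm : l ≤ m + 1)
    (hlift : ∀ A ∈ X, Function.Surjective fun t : A ⟶ S.X₂ => t ≫ S.g)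
    (h₂ : S.X₂ ∈ rightPerpLE X l) (h₃ : S.X₃ ∈ rightPerpLE X m) : S.X₁ ∈ rightPerpLE X l := by
  intro A hA i hi hil
  have := h₂ A hA i hi hil
  obtain rfl | hi := hi.eq_or_lt
  · exact subsingleton_ext_one_left_of_surjective hS (hlift A hA)
  · obtain ⟨k, rfl⟩ := Nat.exists_eq_add_of_le' hi
    have := h₃ A hA (k + 1) (by lia) (by lia)
    exact subsingleton_ext_left_of_shortExact hS

theorem right_mem_leftPerpLE_of_shortExact {n : ℕ} (h₁ : S.X₁ ∈ leftPerpLE X n)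
    (h₂ : S.X₂ ∈ leftPerpLE X (n + 1)) (h₃ : S.X₃ ∈ leftPerpLE X 1) :
    S.X₃ ∈ leftPerpLE X (n + 1) := by
  intro A hA i hi hin
  obtain rfl | hi := hi.eq_or_lt
  · exact h₃ A hA 1 le_rfl le_rfl
  · obtain ⟨k, rfl⟩ := Nat.exists_eq_add_of_le' hi
    have := h₁ A hA (k + 1) (by lia) (by lia)
    have := h₂ A hA (k + 2) (by lia) hin
    exact subsingleton_ext_right_of_shortExact hS

end DimensionShifting

section SyzygySequence

variable [EnoughProjectives C] {A N : C}

/-- The syzygy sequence `K ⟶ A ⊞ P ⟶ N` of an object `N` along a morphism `a : A ⟶ N`, where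
`P ⟶ N` is a chosen epimorphism from a projective object. The summand `P` makes the sequence short
exact even though `a` need not be an epimorphism; if `a` is an `X`-precover, `A ⊞ P ⟶ N` is a right
approximation by the additive closure of `X` and the projective objects. -/
noncomputable abbrev syzygySequence (a : A ⟶ N) : ShortComplex C :=
  .mk (kernel.ι (biprod.desc a (Projective.π N))) (biprod.desc a (Projective.π N))
    (kernel.condition _)

omit [HasExt.{w} C]

theorem syzygySequence_shortExact (a : A ⟶ N) : (syzygySequence a).ShortExact where
  exact := ShortComplex.kernelSequence_exact _
  epi_g := epi_of_epi_fac (biprod.inr_desc a (Projective.π N))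

theorem IsPrecover.surjective_comp_syzygySequence_g {X : Set C} {a : A ⟶ N}
    (ha : IsPrecover X a) {B : C} (hB : B ∈ X) :
    Function.Surjective fun t : B ⟶ (syzygySequence a).X₂ => t ≫ (syzygySequence a).g := by
  intro h
  obtain ⟨t, rfl⟩ := ha.2 B hB h
  exact ⟨t ≫ biprod.inl, by simp⟩

end SyzygySequence

section Syzygies

variable {X : Set C}

theorem subset_leftPerpLE_of_forall_exists_syzygy {D : Set C} {n : ℕ} (hD : D ⊆ leftPerpLE X 1)
    (hsyz : ∀ N ∈ D, ∃ S : ShortComplex C,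
      S.ShortExact ∧ S.X₃ = N ∧ S.X₂ ∈ leftPerpLE X n ∧ S.X₁ ∈ D) :
    D ⊆ leftPerpLE X n := by
  induction n with
  | zero => exact fun _ _ _ _ i hi hi' => by lia
  | succ n ih =>
    have hD' : D ⊆ leftPerpLE X n := ih fun N hN => by
      obtain ⟨S, hS, hSN, h₂, h₁⟩ := hsyz N hN
      exact ⟨S, hS, hSN, leftPerpLE_antitone n.le_succ h₂, h₁⟩
    intro N hN
    obtain ⟨S, hS, rfl, h₂, h₁⟩ := hsyz N hN
    exact right_mem_leftPerpLE_of_shortExact hS (hD' h₁) h₂ (hD hN)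

variable [EnoughProjectives C] {A N : C}

theorem exists_syzygy_mem_rightPerpLE {m n : ℕ} (hmn : m ≤ n) (hrigid : IsRigidLE X n)
    (hn : leftPerpLE X n ⊆ rightPerpLE X n) (hN : N ∈ rightPerpLE X m)
    {a : A ⟶ N} (ha : IsPrecover X a) :
    ∃ S : ShortComplex C,
      S.ShortExact ∧ S.X₃ = N ∧ S.X₂ ∈ leftPerpLE X n ∧ S.X₁ ∈ rightPerpLE X m := by
  have hS := syzygySequence_shortExact a
  have hleft : (syzygySequence a).X₂ ∈ leftPerpLE X n :=
    biprod_mem_leftPerpLE (hrigid A ha.1) (projective_mem_leftPerpLE _ n)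
  have hright : (syzygySequence a).X₂ ∈ rightPerpLE X m := rightPerpLE_antitone hmn (hn hleft)
  exact ⟨_, hS, rfl, hleft, left_mem_rightPerpLE_of_shortExact hS m.le_succ
    (fun _ => ha.surjective_comp_syzygySequence_g) hright hN⟩

theorem stmt13_general {m n : ℕ} (hrigid : IsRigidLE X n)
    (hprec : IsPrecoveringIn (rightPerpLE X m) X)
    (hn : leftPerpLE X n ⊆ rightPerpLE X n) (hmn : m ≤ n)
    (hm : rightPerpLE X m ⊆ leftPerpLE X 1) :
    rightPerpLE X m = rightPerpLE X n := by
  refine Set.Subset.antisymm (fun N hN => hn ?_) (rightPerpLE_antitone hmn)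
  refine subset_leftPerpLE_of_forall_exists_syzygy hm (fun M hM => ?_) hN
  obtain ⟨A, a, ha⟩ := hprec M hM
  exact exists_syzygy_mem_rightPerpLE hmn hrigid hn hM ha

end Syzygies

/-- Proposition 3.8: under the standing hypotheses, if `2 ≤ m ≤ n+1`, `2m - n ≥ 1`, and
`X^{⊥_{≤ m}} = ^{⊥_{≤ m}}X`, then `X^{⊥_{≤ m}} = X^{⊥_{≤ n+1}}`. -/
theorem stmt13 [EnoughProjectives C] [EnoughInjectives C] (X : Set C) (n m : ℕ)
    (hrigid : IsRigidLE X (n + 1))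
    (hprec : IsPrecoveringIn (Set.univ : Set C) X)
    (hpreenv : IsPreenvelopingIn (Set.univ : Set C) X)
    (heq : rightPerpLE X (n + 1) = leftPerpLE X (n + 1))
    (hm1 : 2 ≤ m) (hm2 : m ≤ n + 1) (hmn : n + 1 ≤ 2 * m)
    (heqm : rightPerpLE X m = leftPerpLE X m) :
    rightPerpLE X m = rightPerpLE X (n + 1) := by
  exact stmt13_general hrigid (fun N _ => hprec N (Set.mem_univ N)) heq.ge hm2
    (heqm.le.trans (leftPerpLE_antitone (one_le_two.trans hm1)))
end

section
/- Let C be an abelian category with enough projectives and injectives, X ⊆ C an (n+2)-rigid functorially finite subcategory with X^{⊥_{≤ n+1}} = ^{⊥_{≤ n+1}}X, and R = X^{⊥_{≤ n+1}}. Then R is a Frobenius exact category (projective and injective objects of R coincide) if and only if Inj(C) ⊆ add(X ∪ Proj(C)) and Proj(C) ⊆ add(X ∪ Inj(C)); and in that case Proj(R) = add(X ∪ Proj(C)) = add(X ∪ Inj(C)) = Inj(R). -/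
open CategoryTheory CategoryTheory.Limits CategoryTheory.Abelian

universe w v u

variable {C : Type u} [Category.{v} C] [Abelian C] [HasExt.{w} C]

/-- `R` (an extension-closed subcategory with its inherited exact structure) is Frobenius:
it has enough projectives and enough injectives and these coincide. -/
def IsFrobeniusIn (R : Set C) : Prop :=
  (∀ N ∈ R, ∃ (A P : C) (i : A ⟶ P) (p : P ⟶ N) (w : i ≫ p = 0),
      (ShortComplex.mk i p w).ShortExact ∧ A ∈ R ∧ P ∈ projIn R) ∧
  (∀ N ∈ R, ∃ (I B : C) (i : N ⟶ I) (p : I ⟶ B) (w : i ≫ p = 0),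
      (ShortComplex.mk i p w).ShortExact ∧ B ∈ R ∧ I ∈ injIn R) ∧
  projIn R = injIn R

/-! Every `N ∈ R` is a quotient of `A ⊞ P`, where `A ⟶ N` is an `X`-precover and `P ⟶ N` is an
epimorphism from a projective of `C`. Morphisms from `X` to `N` lift along it, so the long exact
sequence of `Ext(X, -)` puts its kernel in `X^{⊥_{≤ n+1}} = R`. Both summands are projective in `R`,
so `R` has enough projectives, and a projective object of `R` splits off such a quotient and hence
lies in `add(X ∪ Proj(C))`. Since `R` is also the left orthogonal `^{⊥_{≤ n+1}}X`, the dual argument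
gives enough injectives and `Inj(R) = add(X ∪ Inj(C))`. So `R` is Frobenius exactly when the two
additive closures agree. -/

section AddClosure

variable {𝒜 : Type*} [Category* 𝒜] [Abelian 𝒜] {S T U : Set 𝒜}

/-- A class of objects that contains the zero objects and is closed under binary direct sums and
retracts; these are the classes equal to their own `addClosure`. -/
structure IsAddClosed (T : Set 𝒜) : Prop where
  zero_mem {O : 𝒜} : IsZero O → O ∈ T
  biprod_mem {A B : 𝒜} : A ∈ T → B ∈ T → (A ⊞ B) ∈ T
  retract_mem {A B : 𝒜} : Retract A B → B ∈ T → A ∈ T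

lemma IsAddClosed.inter (hS : IsAddClosed S) (hT : IsAddClosed T) : IsAddClosed (S ∩ T) where
  zero_mem hO := ⟨hS.zero_mem hO, hT.zero_mem hO⟩
  biprod_mem hA hB := ⟨hS.biprod_mem hA.1 hB.1, hT.biprod_mem hA.2 hB.2⟩
  retract_mem r hB := ⟨hS.retract_mem r hB.1, hT.retract_mem r hB.2⟩

lemma isAddClosed_addClosure (S : Set 𝒜) : IsAddClosed {A | addClosure S A} where
  zero_mem hO := .zero _ hO
  biprod_mem hA hB := .biprod hA hB
  retract_mem r hB := .retract r.i r.r r.retract hB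

lemma subset_addClosure (S : Set 𝒜) : S ⊆ {A | addClosure S A} :=
  fun _ hA => .of hA

lemma IsAddClosed.addClosure_subset_iff (hT : IsAddClosed T) :
    {A | addClosure S A} ⊆ T ↔ S ⊆ T := by
  refine ⟨(subset_addClosure S).trans, fun h A hA => ?_⟩
  induction hA with
  | of hA => exact h hA
  | zero _ hO => exact hT.zero_mem hO
  | biprod _ _ hA hB => exact hT.biprod_mem hA hB
  | retract i r hir _ hB => exact hT.retract_mem ⟨i, r, hir⟩ hB

lemma addClosure_union_eq_addClosure_union_iff :
    {A | addClosure (S ∪ T) A} = {A | addClosure (S ∪ U) A} ↔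
      U ⊆ {A | addClosure (S ∪ T) A} ∧ T ⊆ {A | addClosure (S ∪ U) A} := by
  rw [subset_antisymm_iff, (isAddClosed_addClosure _).addClosure_subset_iff,
    (isAddClosed_addClosure _).addClosure_subset_iff, Set.union_subset_iff, Set.union_subset_iff,
    and_iff_right (Set.subset_union_left.trans (subset_addClosure _)),
    and_iff_right (Set.subset_union_left.trans (subset_addClosure _)), and_comm]

end AddClosure

section Orthogonal

variable {k m : ℕ}

lemma rightPerpLE_anti (X : Set C) (h : k ≤ m) : rightPerpLE X m ⊆ rightPerpLE X k :=
  fun _ hN A hA i hi hik => hN A hA i hi (hik.trans h)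

lemma leftPerpLE_anti (X : Set C) (h : k ≤ m) : leftPerpLE X m ⊆ leftPerpLE X k :=
  fun _ hM A hA i hi hik => hM A hA i hi (hik.trans h)

lemma subset_leftPerpLE_rightPerpLE (X : Set C) (m : ℕ) : X ⊆ leftPerpLE (rightPerpLE X m) m :=
  fun A hA _ hN => hN A hA

lemma subset_rightPerpLE_leftPerpLE (X : Set C) (m : ℕ) : X ⊆ rightPerpLE (leftPerpLE X m) m :=
  fun A hA _ hM => hM A hA

lemma projSet_subset_leftPerpLE (X : Set C) (m : ℕ) : projSet ⊆ leftPerpLE X m := by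
  intro P (_ : Projective P) A _ i hi _
  exact HasProjectiveDimensionLT.subsingleton P 1 i hi A

lemma injSet_subset_rightPerpLE (X : Set C) (m : ℕ) : injSet ⊆ rightPerpLE X m := by
  intro I (_ : Injective I) A _ i hi _
  exact HasInjectiveDimensionLT.subsingleton I 1 i hi A

lemma subsingleton_ext_of_retract_left {A B N : C} (r : Retract A B)
    (h : Subsingleton (Ext B N k)) : Subsingleton (Ext A N k) := by
  refine subsingleton_of_forall_eq 0 fun x => ?_
  rw [← Ext.mk₀_id_comp x, ← r.retract, ← Ext.mk₀_comp_mk₀_assoc,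
    h.elim ((Ext.mk₀ r.r).comp x (zero_add k)) 0, Ext.comp_zero]

lemma subsingleton_ext_of_retract_right {A B N : C} (r : Retract A B)
    (h : Subsingleton (Ext N B k)) : Subsingleton (Ext N A k) := by
  refine subsingleton_of_forall_eq 0 fun x => ?_
  rw [← Ext.comp_mk₀_id x, ← r.retract, ← Ext.mk₀_comp_mk₀, ← Ext.comp_assoc_of_third_deg_zero,
    h.elim (x.comp (Ext.mk₀ r.i) (add_zero k)) 0, Ext.zero_comp]

lemma isAddClosed_leftPerpLE (X : Set C) (m : ℕ) : IsAddClosed (leftPerpLE X m) where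
  zero_mem hO := projSet_subset_leftPerpLE X m hO.projective
  biprod_mem hA hB N hN i hi him :=
    have := hA N hN i hi him
    have := hB N hN i hi him
    Ext.biprodAddEquiv.toEquiv.subsingleton
  retract_mem r hB N hN i hi him := subsingleton_ext_of_retract_left r (hB N hN i hi him)

lemma isAddClosed_rightPerpLE (X : Set C) (m : ℕ) : IsAddClosed (rightPerpLE X m) where
  zero_mem hO := injSet_subset_rightPerpLE X m hO.injective
  biprod_mem hA hB M hM i hi him :=
    have := hA M hM i hi him
    have := hB M hM i hi him
    Ext.addEquivBiprod.toEquiv.subsingleton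
  retract_mem r hB M hM i hi him := subsingleton_ext_of_retract_right r (hB M hM i hi him)

end Orthogonal

section DimensionShift

variable {X : Set C} {m : ℕ} {S : ShortComplex C}

lemma mem_rightPerpLE_succ_of_shortExact (hS : S.ShortExact)
    (h₂ : S.X₂ ∈ rightPerpLE X (m + 1)) (h₃ : S.X₃ ∈ rightPerpLE X m)
    (hlift : ∀ A ∈ X, ∀ f : A ⟶ S.X₃, ∃ t : A ⟶ S.X₂, t ≫ S.g = f) :
    S.X₁ ∈ rightPerpLE X (m + 1) := by
  intro A hA i hi him
  obtain ⟨k, rfl⟩ := Nat.exists_eq_add_of_le' hi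
  refine subsingleton_of_forall_eq 0 fun x => ?_
  obtain ⟨y, rfl⟩ := Ext.covariant_sequence_exact₁ A hS x ((h₂ A hA _ hi him).elim _ _) rfl
  rcases k.eq_zero_or_pos with rfl | hk
  · obtain ⟨f, rfl⟩ := (Ext.mk₀_bijective _ _).2 y
    obtain ⟨t, rfl⟩ := hlift A hA f
    rw [← Ext.mk₀_comp_mk₀, Ext.comp_assoc_of_second_deg_zero, hS.comp_extClass, Ext.comp_zero]
  · rw [(h₃ A hA k hk (Nat.le_of_succ_le_succ him)).elim y 0, Ext.zero_comp]

lemma mem_leftPerpLE_succ_of_shortExact (hS : S.ShortExact)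
    (h₂ : S.X₂ ∈ leftPerpLE X (m + 1)) (h₁ : S.X₁ ∈ leftPerpLE X m)
    (hext : ∀ A ∈ X, ∀ f : S.X₁ ⟶ A, ∃ t : S.X₂ ⟶ A, S.f ≫ t = f) :
    S.X₃ ∈ leftPerpLE X (m + 1) := by
  intro A hA i hi him
  obtain ⟨k, rfl⟩ := Nat.exists_eq_add_of_le' hi
  refine subsingleton_of_forall_eq 0 fun x => ?_
  obtain ⟨y, rfl⟩ :=
    Ext.contravariant_sequence_exact₃ hS A x ((h₂ A hA _ hi him).elim _ _) (add_comm 1 k)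
  rcases k.eq_zero_or_pos with rfl | hk
  · obtain ⟨f, rfl⟩ := (Ext.mk₀_bijective _ _).2 y
    obtain ⟨t, rfl⟩ := hext A hA f
    rw [← Ext.mk₀_comp_mk₀, ← Ext.comp_assoc_of_second_deg_zero, hS.extClass_comp, Ext.zero_comp]
  · rw [(h₁ A hA k hk (Nat.le_of_succ_le_succ him)).elim y 0, Ext.comp_zero]

lemma nonempty_splitting_of_subsingleton_ext (hS : S.ShortExact)
    (h : Subsingleton (Ext S.X₃ S.X₁ 1)) : Nonempty S.Splitting := by
  obtain ⟨y, hy⟩ := Ext.covariant_sequence_exact₃ S.X₃ hS (Ext.mk₀ (𝟙 S.X₃)) (zero_add 1)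
    (h.elim _ _)
  obtain ⟨s, rfl⟩ := (Ext.mk₀_bijective _ _).2 y
  rw [Ext.mk₀_comp_mk₀] at hy
  exact ⟨.ofExactOfSection S hS.exact s ((Ext.mk₀_bijective _ _).1 hy) hS.mono_f⟩

end DimensionShift

section ExactSubcategory

/-- `Q` generates the subcategory `R` with its inherited exact structure: every object of `R` is a
quotient of an object of `Q` with kernel in `R`. For `Q = projIn R` this says that `R` has enough
projectives. The inclusion `Q ⊆ R` is not required. -/
def IsGeneratingIn (R Q : Set C) : Prop :=
  ∀ N ∈ R, ∃ (A P : C) (i : A ⟶ P) (p : P ⟶ N) (w : i ≫ p = 0),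
    (ShortComplex.mk i p w).ShortExact ∧ A ∈ R ∧ P ∈ Q

/-- `Q` cogenerates the subcategory `R` with its inherited exact structure: every object of `R`
embeds in an object of `Q` with cokernel in `R`. For `Q = injIn R` this says that `R` has enough
injectives. The inclusion `Q ⊆ R` is not required. -/
def IsCogeneratingIn (R Q : Set C) : Prop :=
  ∀ N ∈ R, ∃ (I B : C) (i : N ⟶ I) (p : I ⟶ B) (w : i ≫ p = 0),
    (ShortComplex.mk i p w).ShortExact ∧ B ∈ R ∧ I ∈ Q

variable {R Q : Set C}

lemma projIn_eq_inter_leftPerpLE (R : Set C) : projIn R = R ∩ leftPerpLE R 1 := by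
  ext P
  refine and_congr_right fun _ => forall₂_congr fun N _ => ⟨fun h i hi hi' => ?_, fun h => ?_⟩
  · rwa [le_antisymm hi' hi]
  · exact h 1 le_rfl le_rfl

lemma injIn_eq_inter_rightPerpLE (R : Set C) : injIn R = R ∩ rightPerpLE R 1 := by
  ext I
  refine and_congr_right fun _ => forall₂_congr fun N _ => ⟨fun h i hi hi' => ?_, fun h => ?_⟩
  · rwa [le_antisymm hi' hi]
  · exact h 1 le_rfl le_rfl

lemma IsGeneratingIn.projIn_subset (h : IsGeneratingIn R Q) (hQ : IsAddClosed Q) :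
    projIn R ⊆ Q := by
  rintro N ⟨hN, hExt⟩
  obtain ⟨A, P, i, p, w, hS, hA, hP⟩ := h N hN
  obtain ⟨σ⟩ := nonempty_splitting_of_subsingleton_ext hS (hExt A hA)
  exact hQ.retract_mem ⟨σ.s, p, σ.s_g⟩ hP

lemma IsCogeneratingIn.injIn_subset (h : IsCogeneratingIn R Q) (hQ : IsAddClosed Q) :
    injIn R ⊆ Q := by
  rintro N ⟨hN, hExt⟩
  obtain ⟨I, B, i, p, w, hS, hB, hI⟩ := h N hN
  obtain ⟨σ⟩ := nonempty_splitting_of_subsingleton_ext hS (hExt B hB)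
  exact hQ.retract_mem ⟨i, σ.r, σ.f_r⟩ hI

lemma isFrobeniusIn_iff_projIn_eq_injIn (hP : IsGeneratingIn R (projIn R))
    (hI : IsCogeneratingIn R (injIn R)) : IsFrobeniusIn R ↔ projIn R = injIn R :=
  ⟨fun h => h.2.2, fun h => ⟨hP, hI, h⟩⟩

end ExactSubcategory

section Reduction

variable {X : Set C} {m : ℕ}

lemma isGeneratingIn_rightPerpLE [EnoughProjectives C]
    (hX : X ∪ projSet ⊆ rightPerpLE X (m + 1))
    (hprec : IsPrecoveringIn (rightPerpLE X (m + 1)) X) :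
    IsGeneratingIn (rightPerpLE X (m + 1)) {A | addClosure (X ∪ projSet) A} := by
  intro N hN
  obtain ⟨A, g, hA, hg⟩ := hprec N hN
  let p : A ⊞ Projective.over N ⟶ N := biprod.desc g (Projective.π N)
  have hp : Epi p := inferInstanceAs (Epi (biprod.desc g (Projective.π N)))
  have hadd : addClosure (X ∪ projSet) (A ⊞ Projective.over N) :=
    .biprod (.of (.inl hA)) (.of (.inr (Projective.projective_over N)))
  have hS : (ShortComplex.kernelSequence p).ShortExact :=
    { exact := ShortComplex.kernelSequence_exact p
      epi_g := hp }
  have hlift : ∀ B ∈ X, ∀ f : B ⟶ N, ∃ t : B ⟶ A ⊞ Projective.over N, t ≫ p = f := by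
    intro B hB f
    obtain ⟨t, rfl⟩ := hg B hB f
    exact ⟨t ≫ biprod.inl, by simp [p]⟩
  exact ⟨_, _, _, p, _, hS, mem_rightPerpLE_succ_of_shortExact hS
    ((isAddClosed_rightPerpLE X _).addClosure_subset_iff.2 hX hadd)
    (rightPerpLE_anti X m.le_succ hN) hlift, hadd⟩

lemma isCogeneratingIn_leftPerpLE [EnoughInjectives C]
    (hX : X ∪ injSet ⊆ leftPerpLE X (m + 1))
    (hpreenv : IsPreenvelopingIn (leftPerpLE X (m + 1)) X) :
    IsCogeneratingIn (leftPerpLE X (m + 1)) {A | addClosure (X ∪ injSet) A} := by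
  intro N hN
  obtain ⟨A, g, hA, hg⟩ := hpreenv N hN
  let j : N ⟶ A ⊞ Injective.under N := biprod.lift g (Injective.ι N)
  have hj : Mono j := inferInstanceAs (Mono (biprod.lift g (Injective.ι N)))
  have hadd : addClosure (X ∪ injSet) (A ⊞ Injective.under N) :=
    .biprod (.of (.inl hA)) (.of (.inr (Injective.injective_under N)))
  have hS : (ShortComplex.cokernelSequence j).ShortExact :=
    { exact := ShortComplex.cokernelSequence_exact j
      mono_f := hj }
  have hext : ∀ B ∈ X, ∀ f : N ⟶ B, ∃ t : A ⊞ Injective.under N ⟶ B, j ≫ t = f := by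
    intro B hB f
    obtain ⟨t, rfl⟩ := hg B hB f
    exact ⟨biprod.fst ≫ t, by simp [j]⟩
  exact ⟨_, _, j, _, _, hS, mem_leftPerpLE_succ_of_shortExact hS
    ((isAddClosed_leftPerpLE X _).addClosure_subset_iff.2 hX hadd)
    (leftPerpLE_anti X m.le_succ hN) hext, hadd⟩

theorem projIn_rightPerpLE [EnoughProjectives C]
    (hX : X ∪ projSet ⊆ rightPerpLE X (m + 1))
    (hprec : IsPrecoveringIn (rightPerpLE X (m + 1)) X) :
    projIn (rightPerpLE X (m + 1)) = {A | addClosure (X ∪ projSet) A} := by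
  refine subset_antisymm
    ((isGeneratingIn_rightPerpLE hX hprec).projIn_subset (isAddClosed_addClosure _)) ?_
  have hperp : X ⊆ leftPerpLE (rightPerpLE X (m + 1)) 1 :=
    (subset_leftPerpLE_rightPerpLE X _).trans (leftPerpLE_anti _ m.succ_pos)
  rw [projIn_eq_inter_leftPerpLE, ((isAddClosed_rightPerpLE _ _).inter
    (isAddClosed_leftPerpLE _ _)).addClosure_subset_iff]
  exact Set.subset_inter hX (Set.union_subset hperp (projSet_subset_leftPerpLE _ _))

theorem injIn_leftPerpLE [EnoughInjectives C]
    (hX : X ∪ injSet ⊆ leftPerpLE X (m + 1))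
    (hpreenv : IsPreenvelopingIn (leftPerpLE X (m + 1)) X) :
    injIn (leftPerpLE X (m + 1)) = {A | addClosure (X ∪ injSet) A} := by
  refine subset_antisymm
    ((isCogeneratingIn_leftPerpLE hX hpreenv).injIn_subset (isAddClosed_addClosure _)) ?_
  have hperp : X ⊆ rightPerpLE (leftPerpLE X (m + 1)) 1 :=
    (subset_rightPerpLE_leftPerpLE X _).trans (rightPerpLE_anti _ m.succ_pos)
  rw [injIn_eq_inter_rightPerpLE, ((isAddClosed_leftPerpLE _ _).inter
    (isAddClosed_rightPerpLE _ _)).addClosure_subset_iff]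
  exact Set.subset_inter hX (Set.union_subset hperp (injSet_subset_rightPerpLE _ _))

end Reduction

theorem stmt19_general [EnoughProjectives C] [EnoughInjectives C] (X : Set C) (n : ℕ)
    (hrigid : IsRigidLE X (n + 1))
    (hprec : IsPrecoveringIn (rightPerpLE X (n + 1)) X)
    (hpreenv : IsPreenvelopingIn (rightPerpLE X (n + 1)) X)
    (heq : rightPerpLE X (n + 1) = leftPerpLE X (n + 1)) :
    (IsFrobeniusIn (rightPerpLE X (n + 1)) ↔
      (injSet ⊆ {A | addClosure (X ∪ projSet) A} ∧
       projSet ⊆ {A | addClosure (X ∪ injSet) A})) ∧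
    (IsFrobeniusIn (rightPerpLE X (n + 1)) →
      projIn (rightPerpLE X (n + 1)) = {A | addClosure (X ∪ projSet) A} ∧
      {A | addClosure (X ∪ projSet) A} = {A | addClosure (X ∪ injSet) A} ∧
      {A | addClosure (X ∪ injSet) A} = injIn (rightPerpLE X (n + 1))) := by
  have hX : X ⊆ rightPerpLE X (n + 1) := fun B hB A hA => hrigid A hA B hB
  have hXP : X ∪ projSet ⊆ rightPerpLE X (n + 1) :=
    Set.union_subset hX (heq ▸ projSet_subset_leftPerpLE X _)
  have hXI : X ∪ injSet ⊆ leftPerpLE X (n + 1) :=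
    heq ▸ Set.union_subset hX (injSet_subset_rightPerpLE X _)
  have hgen := isGeneratingIn_rightPerpLE hXP hprec
  have hproj := projIn_rightPerpLE hXP hprec
  obtain ⟨hcogen, hinj⟩ :
      IsCogeneratingIn (rightPerpLE X (n + 1)) {A | addClosure (X ∪ injSet) A} ∧
        injIn (rightPerpLE X (n + 1)) = {A | addClosure (X ∪ injSet) A} := by
    rw [heq] at hpreenv ⊢
    exact ⟨isCogeneratingIn_leftPerpLE hXI hpreenv, injIn_leftPerpLE hXI hpreenv⟩
  have hfrob := isFrobeniusIn_iff_projIn_eq_injIn (hproj ▸ hgen) (hinj ▸ hcogen)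
  rw [hproj, hinj] at hfrob ⊢
  exact ⟨hfrob.trans addClosure_union_eq_addClosure_union_iff, fun h => ⟨rfl, hfrob.1 h, rfl⟩⟩

/-- Corollary 3.10: the reduction `R = X^{⊥_{≤ n+1}}` is a Frobenius exact category if
and only if `Inj(C) ⊆ add(X ∪ Proj C)` and `Proj(C) ⊆ add(X ∪ Inj C)`; and in that case
`Proj(R) = add(X ∪ Proj C) = add(X ∪ Inj C) = Inj(R)`. -/
theorem stmt19 [EnoughProjectives C] [EnoughInjectives C] (X : Set C) (n : ℕ)
    (hrigid : IsRigidLE X (n + 1))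
    (hprec : IsPrecoveringIn (Set.univ : Set C) X)
    (hpreenv : IsPreenvelopingIn (Set.univ : Set C) X)
    (heq : rightPerpLE X (n + 1) = leftPerpLE X (n + 1)) :
    (IsFrobeniusIn (rightPerpLE X (n + 1)) ↔
      (injSet ⊆ setOf (addClosure (X ∪ projSet)) ∧
       projSet ⊆ setOf (addClosure (X ∪ injSet)))) ∧
    (IsFrobeniusIn (rightPerpLE X (n + 1)) →
      projIn (rightPerpLE X (n + 1)) = setOf (addClosure (X ∪ projSet)) ∧
      setOf (addClosure (X ∪ projSet)) = setOf (addClosure (X ∪ injSet)) ∧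
      setOf (addClosure (X ∪ injSet)) = injIn (rightPerpLE X (n + 1))) :=
  stmt19_general X n hrigid (fun M _ => hprec M trivial) (fun M _ => hpreenv M trivial) heq
end
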